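/- Assume additionally λ₁ < 0, λ₂ < 0, α₂ < 4 < α₃, and let θ be a real number with 4/α₃ < θ < 1. Let M ≥ 0 and C₁, C₂, δ₁, δ₂ > 0 be real numbers such that N₁ ≤ C₁·M + δ₁·N₃, N₂ ≤ C₂·M + δ₂·N₃, δ₁·|λ₁|·(α₃θ−α₁)/(α₁+2) ≤ |λ₃|·α₃·(1−θ)/(2(α₃+2)), and δ₂·|λ₂|·(α₃θ−α₂)/(α₂+2) ≤ |λ₃|·α₃·(1−θ)/(2(α₃+2)). Then Y ≥ ((α₃θ − 4)/2)·G − (|λ₁|·C₁·(α₃θ−α₁)/(α₁+2) + |λ₂|·C₂·(α₃θ−α₂)/(α₂+2))·M − α₃θ·E. -/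

import Mathlib

/-!
Adding `p * E` to `Y` turns the coefficient of each `Nⱼ` into `λⱼ (p - αⱼ) / (αⱼ + 2)`. For
`p = θ * α` with `α` the leading power and `θ < 1`, the focusing leading term keeps the good
coefficient `|λ| α (1 - θ) / (α + 2)`. Interpolation bounds the lower-order terms by mass plus a
small multiple of the leading norm, and the leading term absorbs that multiple.
-/

open Finset

/-- The conserved energy of a one-dimensional NLS with nonlinearity `∑ⱼ lⱼ |u|^{αⱼ} u`, in terms of
`G = ‖u_x‖²` in `L²` and `N j = ‖u‖^{αⱼ+2}` in `L^{αⱼ+2}`. -/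
noncomputable def nlsEnergy {ι : Type*} [Fintype ι] (G : ℝ) (l α N : ι → ℝ) : ℝ :=
  G / 2 + ∑ j, l j * N j / (α j + 2)

/-- The virial quantity `Y` of the same equation, normalised so that the variance `V` satisfies
`V_tt = -4 * Y`. -/
noncomputable def nlsVirial {ι : Type*} [Fintype ι] (G : ℝ) (l α N : ι → ℝ) : ℝ :=
  -2 * G - ∑ j, l j * α j * N j / (α j + 2)

theorem nlsVirial_add_mul_nlsEnergy {ι : Type*} [Fintype ι] (G p : ℝ) (l α N : ι → ℝ) :
    nlsVirial G l α N + p * nlsEnergy G l α N =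
      (p - 4) / 2 * G + ∑ j, l j * (p - α j) / (α j + 2) * N j := by
  have term_eq (j : ι) : l j * (p - α j) / (α j + 2) * N j =
      p * (l j * N j / (α j + 2)) - l j * α j * N j / (α j + 2) := by ring
  simp only [nlsVirial, nlsEnergy, term_eq, sum_sub_distrib, ← mul_sum]
  ring

theorem lowerOrderTerm_ge_of_interp {l α p N C M δ K : ℝ} (hα : -2 < α) (hαp : α ≤ p) (hN : 0 ≤ N)
    (hinterp : N ≤ C * M + δ * K) :
    -(|l| * C * (p - α) / (α + 2) * M + δ * |l| * (p - α) / (α + 2) * K) ≤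
      l * (p - α) / (α + 2) * N := by
  have weight_nonneg : 0 ≤ (p - α) / (α + 2) := div_nonneg (by linarith) (by linarith)
  calc
    _ = -(|l| * ((p - α) / (α + 2)) * (C * M + δ * K)) := by ring
    _ ≤ -(|l| * ((p - α) / (α + 2)) * N) := by gcongr
    _ = -|l| * ((p - α) / (α + 2) * N) := by ring
    _ ≤ l * ((p - α) / (α + 2) * N) := by
      gcongr
      exact neg_abs_le l
    _ = l * (p - α) / (α + 2) * N := by ring

theorem sum_lowerOrderTerm_ge_of_interp {ι : Type*} [Fintype ι] {l α N C δ : ι → ℝ} {p M K : ℝ}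
    (hα : ∀ j, -2 < α j) (hαp : ∀ j, α j ≤ p) (hN : ∀ j, 0 ≤ N j)
    (hinterp : ∀ j, N j ≤ C j * M + δ j * K) :
    -((∑ j, |l j| * C j * (p - α j) / (α j + 2)) * M +
        (∑ j, δ j * |l j| * (p - α j) / (α j + 2)) * K) ≤
      ∑ j, l j * (p - α j) / (α j + 2) * N j := by
  rw [sum_mul, sum_mul, ← sum_add_distrib, ← sum_neg_distrib]
  exact sum_le_sum fun j _ ↦ lowerOrderTerm_ge_of_interp (hα j) (hαp j) (hN j) (hinterp j)

open Fin in
theorem virial_case2C_general {n : ℕ} {l α N : Fin (n + 1) → ℝ} {C δ : Fin n → ℝ}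
    (G : ℝ) {M θ : ℝ} (hα : ∀ j, -2 < α j) (hαθ : ∀ j : Fin n, α j.castSucc ≤ α (last n) * θ)
    (hN : ∀ j, 0 ≤ N j) (hl : l (last n) ≤ 0)
    (hinterp : ∀ j : Fin n, N j.castSucc ≤ C j * M + δ j * N (last n))
    (hsmall : ∑ j : Fin n,
        δ j * |l j.castSucc| * (α (last n) * θ - α j.castSucc) / (α j.castSucc + 2) ≤
      |l (last n)| * α (last n) * (1 - θ) / (α (last n) + 2)) :
    (α (last n) * θ - 4) / 2 * G
        - (∑ j : Fin n,
            |l j.castSucc| * C j * (α (last n) * θ - α j.castSucc) / (α j.castSucc + 2)) * M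
        - α (last n) * θ * nlsEnergy G l α N ≤
      nlsVirial G l α N := by
  have virial_eq := nlsVirial_add_mul_nlsEnergy G (α (last n) * θ) l α N
  rw [Fin.sum_univ_castSucc] at virial_eq
  have leading_eq : l (last n) * (α (last n) * θ - α (last n)) / (α (last n) + 2) * N (last n) =
      |l (last n)| * α (last n) * (1 - θ) / (α (last n) + 2) * N (last n) := by
    rw [abs_of_nonpos hl]
    ring
  have lower_ge := sum_lowerOrderTerm_ge_of_interp (l := fun j : Fin n ↦ l j.castSucc)
    (fun j ↦ hα j.castSucc) hαθ (fun j ↦ hN j.castSucc) hinterp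
  have absorbed := mul_le_mul_of_nonneg_right hsmall (hN (last n))
  linarith

theorem virial_case2C
    (G N₁ N₂ N₃ : ℝ) (hG : 0 ≤ G) (hN₁ : 0 ≤ N₁) (hN₂ : 0 ≤ N₂) (hN₃ : 0 ≤ N₃)
    (l₁ l₂ l₃ : ℝ) (hl₃ : l₃ < 0)
    (α₁ α₂ α₃ : ℝ) (hα₁ : 0 < α₁) (h₁₂ : α₁ < α₂) (h₂₃ : α₂ < α₃)
    (E Y : ℝ)
    (hE : E = G / 2 + l₁ * N₁ / (α₁ + 2) + l₂ * N₂ / (α₂ + 2) + l₃ * N₃ / (α₃ + 2))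
    (hY : Y = -2 * G - l₁ * α₁ * N₁ / (α₁ + 2) - l₂ * α₂ * N₂ / (α₂ + 2) - l₃ * α₃ * N₃ / (α₃ + 2))
    (hl₁ : l₁ < 0) (hl₂ : l₂ < 0) (hα₂4 : α₂ < 4) (h4α₃ : 4 < α₃)
    (θ : ℝ) (hθ₁ : 4 / α₃ < θ) (hθ₂ : θ < 1)
    (M C₁ C₂ δ₁ δ₂ : ℝ) (hM : 0 ≤ M) (hC₁ : 0 < C₁) (hC₂ : 0 < C₂) (hδ₁ : 0 < δ₁) (hδ₂ : 0 < δ₂)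
    (hinterp₁ : N₁ ≤ C₁ * M + δ₁ * N₃)
    (hinterp₂ : N₂ ≤ C₂ * M + δ₂ * N₃)
    (hδ₁small : δ₁ * |l₁| * (α₃ * θ - α₁) / (α₁ + 2) ≤ |l₃| * α₃ * (1 - θ) / (2 * (α₃ + 2)))
    (hδ₂small : δ₂ * |l₂| * (α₃ * θ - α₂) / (α₂ + 2) ≤ |l₃| * α₃ * (1 - θ) / (2 * (α₃ + 2))) :
    Y ≥ ((α₃ * θ - 4) / 2) * G
      - (|l₁| * C₁ * (α₃ * θ - α₁) / (α₁ + 2) + |l₂| * C₂ * (α₃ * θ - α₂) / (α₂ + 2)) * M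
      - α₃ * θ * E := by
  have α_pos : ∀ j, 0 < ![α₁, α₂, α₃] j := Fin.forall_fin_succ.2
    ⟨hα₁, Fin.forall_fin_two.2 ⟨hα₁.trans h₁₂, (hα₁.trans h₁₂).trans h₂₃⟩⟩
  have N_nonneg : ∀ j, 0 ≤ ![N₁, N₂, N₃] j :=
    Fin.forall_fin_succ.2 ⟨hN₁, Fin.forall_fin_two.2 ⟨hN₂, hN₃⟩⟩
  have four_lt : 4 < α₃ * θ := (div_lt_iff₀' (by linarith)).1 hθ₁
  have sum_small := (add_le_add hδ₁small hδ₂small).trans_eq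
    (by rw [mul_comm 2, ← div_div, add_halves])
  have E_eq : E = nlsEnergy G ![l₁, l₂, l₃] ![α₁, α₂, α₃] ![N₁, N₂, N₃] := by
    simp [hE, nlsEnergy, Fin.sum_univ_three, add_assoc]
  have Y_eq : Y = nlsVirial G ![l₁, l₂, l₃] ![α₁, α₂, α₃] ![N₁, N₂, N₃] := by
    simp [hY, nlsVirial, Fin.sum_univ_three, sub_sub, add_assoc]
  have bound := virial_case2C_general (l := ![l₁, l₂, l₃]) (C := ![C₁, C₂]) (δ := ![δ₁, δ₂]) G
    (fun j ↦ (by norm_num : (-2 : ℝ) < 0).trans (α_pos j))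
    (Fin.forall_fin_two.2 ⟨(h₁₂.trans (hα₂4.trans four_lt)).le, (hα₂4.trans four_lt).le⟩)
    N_nonneg hl₃.le (Fin.forall_fin_two.2 ⟨hinterp₁, hinterp₂⟩)
    ((Fin.sum_univ_two _).trans_le sum_small)
  rwa [← E_eq, ← Y_eq, Fin.sum_univ_two] at bound
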